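/- Let r ≥ 2 and a ≥ 1 be fixed integers, let d > 0 be a fixed real number, and let 𝒯 be a Builder strategy tree with r colors on a board with a vertices that is legal for density restriction d. Then for every function N : ℕ → ℕ with n^{2−1/d} = o(N(n)) and N(n) ≤ n(n−1)/2 for all n, and for every sequence of online Painter strategies with r colors (one for each n), the probability that the r-edge-colored board G_{N(n)} of the online game on n vertices contains a copy (as an edge-colored graph) of some leaf of 𝒯 tends to 1 as n → ∞. -/

import Mathlib

open SimpleGraph Filter Asymptotics
open scoped Classical

/-- A history of the game: the sequence of edges presented so far, together with
the colors (elements of `Fin r`, representing the colors `1,…,r`) they received. -/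
abbrev EdgeHistory (V : Type) (r : ℕ) := List (Sym2 V × Fin r)

/-- A Painter strategy on vertex type `V` with `r` colors: a function assigning a color
to every pair (history, new edge). -/
abbrev PainterStrategy (V : Type) (r : ℕ) := EdgeHistory V r → Sym2 V → Fin r

/-- Auxiliary function: run a Painter strategy on a list of presented edges,
extending the given history. -/
def runPainterAux {V : Type} {r : ℕ} (π : PainterStrategy V r) :
    EdgeHistory V r → List (Sym2 V) → EdgeHistory V r
  | h, [] => h
  | h, e :: es => runPainterAux π (h ++ [(e, π h e)]) es

/-- The colored history obtained by coloring the edges of `l` successively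
according to the Painter strategy `π`. -/
def runPainter {V : Type} {r : ℕ} (π : PainterStrategy V r) (l : List (Sym2 V)) :
    EdgeHistory V r :=
  runPainterAux π [] l

/-- `G` contains a copy of `F`, i.e. a subgraph isomorphic to `F`. -/
def IsCopy {α β : Type} (F : SimpleGraph α) (G : SimpleGraph β) : Prop :=
  ∃ f : α ↪ β, ∀ u v : α, F.Adj u v → G.Adj (f u) (f v)

/-- The graph formed by the edges of color `c` in the history `h`. -/
def colorGraph {V : Type} {r : ℕ} (h : EdgeHistory V r) (c : Fin r) : SimpleGraph V :=
  SimpleGraph.fromEdgeSet {e | (e, c) ∈ h}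

/-- The history `h` contains a monochromatic copy of `F`. -/
def HasMonoCopy {α V : Type} {r : ℕ} (F : SimpleGraph α) (h : EdgeHistory V r) : Prop :=
  ∃ c : Fin r, IsCopy F (colorGraph h c)

/-- The number of edges of `G` lying entirely within the vertex set `S`. -/
noncomputable def edgesWithin {V : Type} (G : SimpleGraph V) (S : Set V) : ℕ :=
  (G.edgeSet ∩ {e | ∀ v ∈ e, v ∈ S}).ncard

/-- `m(G) ≤ d`: every subgraph `H` of `G` with at least one vertex satisfies `e_H ≤ d · v_H`. -/
def DensityLE {V : Type} (G : SimpleGraph V) (d : ℝ) : Prop :=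
  ∀ S : Finset V, S.Nonempty → (edgesWithin G (↑S : Set V) : ℝ) ≤ d * (S.card : ℝ)

/-- `G` contains no cycle and every connected component of `G` has at most `k` edges
(equivalently, `G` is acyclic and contains no connected subgraph with more than `k` edges). -/
def TreeSizeLE {V : Type} (G : SimpleGraph V) (k : ℕ) : Prop :=
  G.IsAcyclic ∧ ∀ S : Set V, (G.induce S).Connected → edgesWithin G S ≤ k

/-- A legal sequence of moves for Builder: distinct non-loop edges. -/
def ValidEdgeSeq {V : Type} (l : List (Sym2 V)) : Prop :=
  l.Nodup ∧ ∀ e ∈ l, ¬ e.IsDiag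

/-- The (uncolored) board formed by a list of edges. -/
def boardOf {V : Type} (l : List (Sym2 V)) : SimpleGraph V :=
  SimpleGraph.fromEdgeSet {e | e ∈ l}

/-- Builder has a winning strategy in the deterministic `F`-avoidance game with `r` colors
and density restriction `d`. -/
def BuilderWinsDensity {α : Type} (F : SimpleGraph α) (r : ℕ) (d : ℝ) : Prop :=
  ∃ a : ℕ, ∀ π : PainterStrategy (Fin a) r, ∃ l : List (Sym2 (Fin a)),
    ValidEdgeSeq l ∧ (∀ i : ℕ, DensityLE (boardOf (l.take i)) d) ∧
    HasMonoCopy F (runPainter π l)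

/-- Builder has a winning strategy in the deterministic `F`-avoidance game with `r` colors
and tree size restriction `k`. -/
def BuilderWinsTree {α : Type} (F : SimpleGraph α) (r k : ℕ) : Prop :=
  ∃ a : ℕ, ∀ π : PainterStrategy (Fin a) r, ∃ l : List (Sym2 (Fin a)),
    ValidEdgeSeq l ∧ (∀ i : ℕ, TreeSizeLE (boardOf (l.take i)) k) ∧
    HasMonoCopy F (runPainter π l)

/-- The Painter strategy `π` on `a` vertices never creates a monochromatic copy of `F`
against any Builder play obeying the tree size restriction `k`. -/
def PainterAvoidsTree {α : Type} (F : SimpleGraph α) (r k a : ℕ)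
    (π : PainterStrategy (Fin a) r) : Prop :=
  ∀ l : List (Sym2 (Fin a)), ValidEdgeSeq l →
    (∀ i : ℕ, TreeSizeLE (boardOf (l.take i)) k) →
    ¬ HasMonoCopy F (runPainter π l)

/-- Painter has a winning strategy in the deterministic `F`-avoidance game with `r` colors
and tree size restriction `k`. -/
def PainterWinsTree {α : Type} (F : SimpleGraph α) (r k : ℕ) : Prop :=
  ∀ a : ℕ, ∃ π : PainterStrategy (Fin a) r, PainterAvoidsTree F r k a π

/-- A sequence of `N` distinct non-loop edges on `n` vertices. -/
def ValidSeqFun {n N : ℕ} (f : Fin N → Sym2 (Fin n)) : Prop :=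
  Function.Injective f ∧ ∀ i, ¬ (f i).IsDiag

/-- The probability (with respect to the uniformly random order in which the `N` distinct
edges of the random process on `n` vertices appear) of the event `P`. -/
noncomputable def onlineProb (n N : ℕ) (P : (Fin N → Sym2 (Fin n)) → Prop) : ℝ :=
  (Set.ncard {f : Fin N → Sym2 (Fin n) | ValidSeqFun f ∧ P f} : ℝ) /
  (Set.ncard {f : Fin N → Sym2 (Fin n) | ValidSeqFun f} : ℝ)

/-- Event: playing the online strategy `π` on the random edge sequence `f` produces
a monochromatic copy of `F`. -/
def OnlineMonoCopy {α : Type} (F : SimpleGraph α) {r n N : ℕ}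
    (π : PainterStrategy (Fin n) r) (f : Fin N → Sym2 (Fin n)) : Prop :=
  HasMonoCopy F (runPainter π (List.ofFn f))

/-- A Builder strategy tree with `r` colors: at each non-leaf node Builder presents
an edge `e`, and the game continues in the child indexed by the color Painter chooses. -/
inductive BuilderTree (V : Type) (r : ℕ) : Type
  | leaf : BuilderTree V r
  | node (e : Sym2 V) (child : Fin r → BuilderTree V r) : BuilderTree V r

/-- The strategy tree is proper, relative to the list `used` of edges already on the board:
every presented edge is a non-loop vertex pair that is not yet an edge of the board. -/
def BuilderTree.Proper {V : Type} {r : ℕ} : BuilderTree V r → List (Sym2 V) → Prop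
  | .leaf, _ => True
  | .node e child, used => ¬ e.IsDiag ∧ e ∉ used ∧ ∀ c : Fin r, (child c).Proper (e :: used)

/-- The strategy tree is legal for density restriction `d`, relative to the set `cur` of
edges already on the board: the underlying uncolored graph of every node satisfies `m(B) ≤ d`. -/
def BuilderTree.LegalDensity {V : Type} {r : ℕ} (d : ℝ) :
    BuilderTree V r → Set (Sym2 V) → Prop
  | .leaf, _ => True
  | .node e child, cur =>
      DensityLE (SimpleGraph.fromEdgeSet (insert e cur)) d ∧
      ∀ c : Fin r, (child c).LegalDensity d (insert e cur)

/-- The colored histories (colored boards) corresponding to the nodes at depth `k` of the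
strategy tree. -/
def BuilderTree.nodeHistsAt {V : Type} {r : ℕ} :
    BuilderTree V r → ℕ → Set (EdgeHistory V r)
  | _, 0 => {[]}
  | .leaf, _ + 1 => ∅
  | .node e child, k + 1 =>
      ⋃ c : Fin r, (fun h => (e, c) :: h) '' ((child c).nodeHistsAt k)

/-- The colored histories (colored boards) corresponding to the leaves of the strategy tree. -/
def BuilderTree.leafHists {V : Type} {r : ℕ} : BuilderTree V r → Set (EdgeHistory V r)
  | .leaf => {[]}
  | .node e child => ⋃ c : Fin r, (fun h => (e, c) :: h) '' ((child c).leafHists)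

/-- The copies of the colored graph given by the history `B` (on `Fin a`) in the colored
graph given by the history `H` (on `Fin n`): injections preserving all edges together with
their colors. -/
def ColoredCopies {a n r : ℕ} (B : EdgeHistory (Fin a) r) (H : EdgeHistory (Fin n) r) :
    Set (Fin a ↪ Fin n) :=
  {f | ∀ c : Fin r, ∀ u v : Fin a,
    (colorGraph B c).Adj u v → (colorGraph H c).Adj (f u) (f v)}

/-- The colored history `H` contains a copy (as an edge-colored graph) of some leaf of `T`. -/
def HasLeafCopy {a n r : ℕ} (T : BuilderTree (Fin a) r) (H : EdgeHistory (Fin n) r) : Prop :=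
  ∃ B ∈ T.leafHists, (ColoredCopies B H).Nonempty

/-!
The `N` rounds contain `K` disjoint blocks of `m ≈ N / K` rounds each, where `K` exceeds the depth
of the strategy tree. For an embedding `φ` of Builder's board into the vertices of the random board,
follow the tree from its root: in the `i`-th block, look for the pair that Builder presents at the
current node, and move on to the child given by the color this pair has at the end of the block.
Dividing the indicator of the event that all these pairs show up by the conditional probabilities of
finding each of them in its block gives a weight that has mean exactly `1`, whatever Painter does,
and that vanishes unless `φ` is a copy of a leaf.

Let `X` be the average of the weight over all `φ`. Two embeddings `φ`, `ψ` are correlated only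
through pairs of vertices they share, and legality bounds the number of such pairs along any branch
by `d` times the number `j` of shared vertices. So the product of their weights has mean at most
`(Q ^ d) ^ j` with `Q = n.choose 2 / m`, and averaging over `φ` gives
`E[X ^ 2] ≤ (n + a * Q ^ d) ^ a / n.descFactorial a`. Since `n ^ (2 - 1 / d) = o(N)`, we have
`Q ^ d = o(n)`, hence `E[X ^ 2] → 1`, and by the Cauchy–Schwarz inequality
`P(X ≠ 0) ≥ E[X] ^ 2 / E[X ^ 2] → 1`.
-/

section SecondMoment

open Finset
open scoped BigOperators

theorem expect_expect_fiber {ι κ F : Type*} [DecidableEq κ] [Semifield F] [CharZero F]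
    (S : Finset ι) (h : ι → κ) (A : ι → F) :
    𝔼 i ∈ S, 𝔼 j ∈ S with h j = h i, A j = 𝔼 j ∈ S, A j := by
  have card_fiber_mul : ∀ j ∈ S, ∑ i ∈ S with h i = h j, (#{k ∈ S | h k = h i} : F)⁻¹ = 1 := by
    intro j hj
    have hne : (#{k ∈ S | h k = h j} : F) ≠ 0 :=
      Nat.cast_ne_zero.2 (card_ne_zero_of_mem (mem_filter.2 ⟨hj, rfl⟩))
    rw [sum_congr rfl fun i hi ↦ by rw [(mem_filter.1 hi).2], sum_const, nsmul_eq_mul,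
      mul_inv_cancel₀ hne]
  simp only [expect_eq_sum_div_card]
  congr 1
  calc ∑ i ∈ S, (∑ j ∈ S with h j = h i, A j) / (#{k ∈ S | h k = h i} : F)
      = ∑ i ∈ S, ∑ j ∈ S with h j = h i, A j * (#{k ∈ S | h k = h i} : F)⁻¹ := by
        simp only [div_eq_mul_inv, sum_mul]
    _ = ∑ j ∈ S, ∑ i ∈ S with h i = h j, A j * (#{k ∈ S | h k = h i} : F)⁻¹ :=
        sum_comm' fun i j ↦ by simp only [mem_filter, eq_comm]; tauto
    _ = ∑ j ∈ S, A j :=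
        sum_congr rfl fun j hj ↦ by rw [← mul_sum, card_fiber_mul j hj, mul_one]

theorem expect_sq_expect {ι κ R : Type*} [CommSemiring R] [Module ℚ≥0 R] [IsScalarTower ℚ≥0 R R]
    [SMulCommClass ℚ≥0 R R] (S : Finset ι) (K : Finset κ) (A : κ → ι → R) :
    𝔼 i ∈ S, (𝔼 k ∈ K, A k i) ^ 2 = 𝔼 l ∈ K, 𝔼 k ∈ K, 𝔼 i ∈ S, A k i * A l i := by
  simp only [sq, expect_mul_expect]
  calc 𝔼 i ∈ S, 𝔼 k ∈ K, 𝔼 l ∈ K, A k i * A l i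
      = 𝔼 k ∈ K, 𝔼 l ∈ K, 𝔼 i ∈ S, A k i * A l i := by
        rw [expect_comm]
        exact expect_congr rfl fun _ _ ↦ expect_comm ..
    _ = 𝔼 l ∈ K, 𝔼 k ∈ K, 𝔼 i ∈ S, A k i * A l i := expect_comm ..

theorem sq_expect_le_expect_sq_mul_expect_ite {ι : Type*} (S : Finset ι) (X : ι → ℝ) (p : ι → Prop)
    [DecidablePred p] (hX : ∀ i ∈ S, X i ≠ 0 → p i) :
    (𝔼 i ∈ S, X i) ^ 2 ≤ (𝔼 i ∈ S, X i ^ 2) * 𝔼 i ∈ S, if p i then (1 : ℝ) else 0 := by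
  have h_support : 𝔼 i ∈ S, X i = 𝔼 i ∈ S, X i * if p i then (1 : ℝ) else 0 :=
    expect_congr rfl fun i hi ↦ by
      by_cases h : p i
      · rw [if_pos h, mul_one]
      · rw [if_neg h, mul_zero, not_ne_iff.1 (mt (hX i hi) h)]
  simpa only [h_support, ite_pow, one_pow, ne_eq, OfNat.ofNat_ne_zero, not_false_eq_true,
    zero_pow] using expect_mul_sq_le_sq_mul_sq S X fun i ↦ if p i then (1 : ℝ) else 0

theorem sum_pow_card_filter_mem {V W R : Type*} [Fintype V] [DecidableEq V] [Fintype W]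
    [DecidableEq W] [CommSemiring R] (A : Finset W) (c : R) :
    ∑ φ : V → W, c ^ #{v | φ v ∈ A} = (#Aᶜ + #A * c) ^ Fintype.card V := by
  calc ∑ φ : V → W, c ^ #{v | φ v ∈ A}
      = ∑ φ : V → W, ∏ v, if φ v ∈ A then c else 1 := by
        simp only [prod_ite, prod_const, one_pow, mul_one]
    _ = (∑ w : W, if w ∈ A then c else 1) ^ Fintype.card V := by
        rw [← card_univ, ← prod_const, prod_univ_sum, Fintype.piFinset_univ]
    _ = (#Aᶜ + #A * c) ^ Fintype.card V := by
        simp only [sum_ite, sum_const, nsmul_eq_mul, mul_one, filter_univ_mem, filter_not,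
          ← compl_eq_univ_sdiff]
        rw [add_comm]

theorem expect_pow_card_filter_mem_le {V W : Type*} [Fintype V] [Fintype W] [DecidableEq W]
    (A : Finset W) {c : ℝ} (hc : 0 ≤ c) :
    𝔼 φ : V ↪ W, c ^ #{v | φ v ∈ A} ≤
      (Fintype.card W + #A * c) ^ Fintype.card V /
        (Fintype.card W).descFactorial (Fintype.card V) := by
  classical
  rw [Fintype.expect_eq_sum_div_card, Fintype.card_embedding_eq]
  gcongr
  calc ∑ φ : V ↪ W, c ^ #{v | φ v ∈ A}
      = ∑ φ ∈ univ.map ⟨fun φ : V ↪ W ↦ (φ : V → W), DFunLike.coe_injective⟩,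
          c ^ #{v | φ v ∈ A} := by rw [sum_map]; rfl
    _ ≤ ∑ φ : V → W, c ^ #{v | φ v ∈ A} := sum_le_univ_sum_of_nonneg fun _ ↦ by positivity
    _ = (#Aᶜ + #A * c) ^ Fintype.card V := sum_pow_card_filter_mem A c
    _ ≤ (Fintype.card W + #A * c) ^ Fintype.card V := by
        gcongr
        exact card_le_univ _

end SecondMoment

section RandomInjections

open Finset
open scoped BigOperators

variable {ι α : Type*} [DecidableEq α] {E : Finset α} {P P' : Finset ι} {f g : ι → α} {x y : α}

theorem card_filter_mem_image {S : Finset (ι → α)} (hS : ∀ f ∈ S, Function.Injective f)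
    (B : Finset ι) (x : α) : #{f ∈ S | x ∈ B.image f} = ∑ j ∈ B, #{f ∈ S | f j = x} := by
  rw [← card_biUnion]
  · congr 1
    ext f
    simp only [mem_filter, mem_image, mem_biUnion]
    tauto
  · refine fun i _ j _ hij ↦ disjoint_left.2 fun f hi hj ↦ hij ?_
    rw [mem_filter] at hi hj
    exact hS f hi.1 (hi.2.trans hj.2.symm)

variable [DecidableEq ι]

/-- The weight with which the draw `f` realizes the target `x` when the rounds of `P` are over and
the rounds of `P'` are being played: `1` if `x` has been drawn already, and otherwise the indicator
that `x` is drawn now, divided by the conditional probability of this event. -/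
noncomputable def hitWeight (E : Finset α) (P P' : Finset ι) (x : α) (f : ι → α) : ℝ :=
  if x ∈ P.image f then 1 else if x ∈ P'.image f then #(E \ P.image f) / #(P' \ P) else 0

theorem hitWeight_nonneg : 0 ≤ hitWeight E P P' x f := by
  unfold hitWeight
  positivity

theorem mem_image_of_hitWeight_ne_zero (hP : P ⊆ P') (h : hitWeight E P P' x f ≠ 0) :
    x ∈ P'.image f := by
  contrapose! h
  rw [hitWeight, if_neg fun hx ↦ h (image_subset_image hP hx), if_neg h]

theorem hitWeight_congr (hP : P ⊆ P') (h : ∀ i ∈ P', f i = g i) :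
    hitWeight E P P' x f = hitWeight E P P' x g := by
  unfold hitWeight
  rw [image_congr (s := P') h, image_congr (s := P) fun i hi ↦ h i (hP hi)]

variable [Fintype ι]

/-- The ways of drawing elements of `E` without replacement in the rounds `ι`. -/
def injectiveSeqs (ι : Type*) [Fintype ι] [DecidableEq ι] (E : Finset α) : Finset (ι → α) :=
  {f ∈ Fintype.piFinset fun _ ↦ E | Function.Injective f}

/-- The draws without replacement that agree with `g` in the rounds `P`. Averaging over this finset
is conditioning on the outcome `g` of these rounds. -/
def extensions (E : Finset α) (P : Finset ι) (g : ι → α) : Finset (ι → α) :=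
  {f ∈ injectiveSeqs ι E | ∀ i ∈ P, f i = g i}

theorem mem_injectiveSeqs : f ∈ injectiveSeqs ι E ↔ (∀ i, f i ∈ E) ∧ Function.Injective f := by
  simp only [injectiveSeqs, mem_filter, Fintype.mem_piFinset]

theorem mem_extensions :
    f ∈ extensions E P g ↔ f ∈ injectiveSeqs ι E ∧ ∀ i ∈ P, f i = g i := mem_filter

theorem extensions_empty : extensions E ∅ g = injectiveSeqs ι E :=
  filter_true_of_mem fun _ _ ↦ by simp

theorem self_mem_extensions (hf : f ∈ injectiveSeqs ι E) : f ∈ extensions E P f :=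
  mem_extensions.2 ⟨hf, fun _ _ ↦ rfl⟩

theorem injective_of_mem_injectiveSeqs (hf : f ∈ injectiveSeqs ι E) : Function.Injective f :=
  (mem_injectiveSeqs.1 hf).2

theorem injective_of_mem_extensions (hf : f ∈ extensions E P g) : Function.Injective f :=
  injective_of_mem_injectiveSeqs (mem_extensions.1 hf).1

theorem image_eq_of_mem_extensions (hf : f ∈ extensions E P g) : P.image f = P.image g :=
  image_congr fun i hi ↦ (mem_extensions.1 hf).2 i hi

theorem card_le_card_of_mem_injectiveSeqs (hf : f ∈ injectiveSeqs ι E) : Fintype.card ι ≤ #E := by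
  rw [← card_univ, ← card_image_of_injective univ (injective_of_mem_injectiveSeqs hf)]
  exact card_le_card (image_subset_iff.2 fun i _ ↦ (mem_injectiveSeqs.1 hf).1 i)

theorem injectiveSeqs_nonempty (h : Fintype.card ι ≤ #E) : (injectiveSeqs ι E).Nonempty := by
  obtain ⟨f⟩ := Function.Embedding.nonempty_of_card_le (h.trans (Fintype.card_coe E).ge)
  exact ⟨fun i ↦ f i, mem_injectiveSeqs.2
    ⟨fun i ↦ (f i).2, Subtype.val_injective.comp f.injective⟩⟩

theorem expect_expect_extensions (hP : P ⊆ P') (A : (ι → α) → ℝ) :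
    𝔼 f₁ ∈ extensions E P g, 𝔼 f ∈ extensions E P' f₁, A f = 𝔼 f ∈ extensions E P g, A f := by
  have fiber_eq : ∀ f₁ ∈ extensions E P g,
      {f ∈ extensions E P g | P'.restrict f = P'.restrict f₁} = extensions E P' f₁ := by
    intro f₁ hf₁
    ext f
    simp only [mem_filter, mem_extensions, funext_iff, Subtype.forall, restrict]
    exact ⟨fun h ↦ ⟨h.1.1, h.2⟩, fun h ↦
      ⟨⟨h.1, fun i hi ↦ (h.2 i (hP hi)).trans ((mem_extensions.1 hf₁).2 i hi)⟩, h.2⟩⟩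
  rw [← expect_expect_fiber _ (P'.restrict : (ι → α) → P' → α) A]
  exact expect_congr rfl fun f₁ hf₁ ↦ by rw [fiber_eq f₁ hf₁]

theorem swap_comp_mem_extensions (hx : x ∈ E \ P.image g) (hy : y ∈ E \ P.image g)
    (hf : f ∈ extensions E P g) : Equiv.swap x y ∘ f ∈ extensions E P g := by
  simp only [Finset.mem_sdiff, Finset.mem_image, not_exists, not_and] at hx hy
  obtain ⟨hf, hfg⟩ := mem_extensions.1 hf
  obtain ⟨hfE, hf⟩ := mem_injectiveSeqs.1 hf
  refine mem_extensions.2 ⟨mem_injectiveSeqs.2 ⟨fun i ↦ ?_, (Equiv.swap x y).injective.comp hf⟩,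
    fun i hi ↦ ?_⟩
  · rw [Function.comp_apply, Equiv.swap_apply_def]
    split_ifs
    exacts [hy.1, hx.1, hfE i]
  · rw [Function.comp_apply, hfg i hi, Equiv.swap_apply_of_ne_of_ne (hx.2 i hi) (hy.2 i hi)]

theorem card_filter_apply_eq_mul {j : ι} (hj : j ∉ P) (hx : x ∈ E \ P.image g) :
    #{f ∈ extensions E P g | f j = x} * #(E \ P.image g) = #(extensions E P g) := by
  have card_eq : ∀ y ∈ E \ P.image g,
      #{f ∈ extensions E P g | f j = y} = #{f ∈ extensions E P g | f j = x} := by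
    intro y hy
    refine card_nbij' (Equiv.swap x y ∘ ·) (Equiv.swap x y ∘ ·) ?_ ?_ ?_ ?_
    all_goals intro f hf
    · have hf := mem_filter.1 hf
      exact mem_filter.2 ⟨swap_comp_mem_extensions hx hy hf.1, by simp [hf.2]⟩
    · have hf := mem_filter.1 hf
      exact mem_filter.2 ⟨swap_comp_mem_extensions hx hy hf.1, by simp [hf.2]⟩
    all_goals exact funext fun i ↦ by simp
  have apply_mem : ∀ f ∈ extensions E P g, f j ∈ E \ P.image g := by
    intro f hf
    obtain ⟨hfE, hfg⟩ := mem_extensions.1 hf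
    refine mem_sdiff.2 ⟨(mem_injectiveSeqs.1 hfE).1 j, fun hmem ↦ ?_⟩
    obtain ⟨i, hi, hij⟩ := mem_image.1 hmem
    exact hj (injective_of_mem_extensions hf ((hfg i hi).trans hij) ▸ hi)
  rw [card_eq_sum_card_fiberwise apply_mem, sum_congr rfl card_eq, sum_const, smul_eq_mul, mul_comm]

theorem card_filter_mem_image_mul {B : Finset ι} (hB : Disjoint B P) (hx : x ∈ E \ P.image g) :
    #{f ∈ extensions E P g | x ∈ B.image f} * #(E \ P.image g) = #B * #(extensions E P g) := by
  rw [card_filter_mem_image fun _ ↦ injective_of_mem_extensions, sum_mul,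
    sum_congr rfl fun j hj ↦ card_filter_apply_eq_mul (disjoint_left.1 hB hj) hx, sum_const,
    smul_eq_mul]

theorem filter_apply_eq_extensions {j : ι} (hj : j ∉ P) (x : α) :
    {f ∈ extensions E P g | f j = x} = extensions E (insert j P) (Function.update g j x) := by
  ext f
  have hg : ∀ i ∈ P, Function.update g j x i = g i := fun i hi ↦
    Function.update_of_ne (ne_of_mem_of_not_mem hi hj) x g
  simp +contextual only [mem_filter, mem_extensions, forall_mem_insert, Function.update_self, hg]
  tauto

theorem card_filter_apply_eq_mem_image_mul_le {B : Finset ι} {j : ι} (hB : Disjoint B P)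
    (hj : j ∈ B) (hx : x ∈ E \ P.image g) (hy : y ∈ E \ P.image g) (hxy : x ≠ y) :
    #{f ∈ extensions E P g | f j = x ∧ y ∈ B.image f} * #(E \ P.image g) ≤
      #B * #{f ∈ extensions E P g | f j = x} := by
  have hjP := disjoint_left.1 hB hj
  have himage : E \ (insert j P).image (Function.update g j x) = (E \ P.image g).erase x := by
    rw [image_insert, Function.update_self, sdiff_insert, image_congr fun i hi ↦
      Function.update_of_ne (ne_of_mem_of_not_mem hi hjP) x g]
  have hcond : #{f ∈ extensions E P g | f j = x ∧ y ∈ B.image f} * (#(E \ P.image g) - 1) =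
      (#B - 1) * #{f ∈ extensions E P g | f j = x} := by
    have hdisj : Disjoint (B.erase j) (insert j P) :=
      disjoint_insert_right.2 ⟨notMem_erase j B, hB.mono_left (erase_subset j B)⟩
    have h := card_filter_mem_image_mul hdisj (himage.symm ▸ mem_erase.2 ⟨hxy.symm, hy⟩)
    rw [himage, card_erase_of_mem hx, card_erase_of_mem hj, ← filter_apply_eq_extensions hjP,
      filter_filter] at h
    rw [← h]
    congr 2
    refine filter_congr fun f _ ↦ and_congr_right fun hf ↦ ?_
    rw [← insert_erase hj, image_insert, erase_insert (notMem_erase j B), hf, mem_insert,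
      or_iff_right hxy.symm]
  have hle : #{f ∈ extensions E P g | f j = x ∧ y ∈ B.image f} ≤
      #{f ∈ extensions E P g | f j = x} :=
    card_le_card fun f hf ↦ by
      rw [mem_filter] at hf ⊢
      exact ⟨hf.1, hf.2.1⟩
  rw [← Nat.sub_add_cancel (card_pos.2 ⟨x, hx⟩), ← Nat.sub_add_cancel (card_pos.2 ⟨j, hj⟩)]
  linarith

theorem card_filter_mem_image_and_mul_sq_le {B : Finset ι} (hB : Disjoint B P)
    (hx : x ∈ E \ P.image g) (hy : y ∈ E \ P.image g) (hxy : x ≠ y) :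
    #{f ∈ extensions E P g | x ∈ B.image f ∧ y ∈ B.image f} * #(E \ P.image g) ^ 2 ≤
      #B ^ 2 * #(extensions E P g) := by
  have hsplit : #{f ∈ extensions E P g | x ∈ B.image f ∧ y ∈ B.image f} =
      ∑ j ∈ B, #{f ∈ extensions E P g | f j = x ∧ y ∈ B.image f} := by
    rw [filter_congr fun _ _ ↦ and_comm, ← filter_filter,
      card_filter_mem_image fun f hf ↦ injective_of_mem_extensions (mem_filter.1 hf).1]
    simp only [filter_filter, and_comm]
  calc #{f ∈ extensions E P g | x ∈ B.image f ∧ y ∈ B.image f} * #(E \ P.image g) ^ 2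
      = ∑ j ∈ B, #{f ∈ extensions E P g | f j = x ∧ y ∈ B.image f} * #(E \ P.image g) *
          #(E \ P.image g) := by rw [hsplit, ← sum_mul, ← sum_mul]; ring
    _ ≤ ∑ j ∈ B, #B * #{f ∈ extensions E P g | f j = x} * #(E \ P.image g) :=
        sum_le_sum fun _ hj ↦ Nat.mul_le_mul_right _
          (card_filter_apply_eq_mem_image_mul_le hB hj hx hy hxy)
    _ = ∑ _j ∈ B, #B * #(extensions E P g) := sum_congr rfl fun _ hj ↦ by
        rw [mul_assoc, card_filter_apply_eq_mul (disjoint_left.1 hB hj) hx]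
    _ = #B ^ 2 * #(extensions E P g) := by rw [sum_const, smul_eq_mul]; ring

theorem hitWeight_eq_one (hf : f ∈ extensions E P g) (hx : x ∈ P.image g) :
    hitWeight E P P' x f = 1 := by
  rw [hitWeight, image_eq_of_mem_extensions hf, if_pos hx]

theorem hitWeight_eq_ite (hP : P ⊆ P') (hf : f ∈ extensions E P g) (hx : x ∉ P.image g) :
    hitWeight E P P' x f =
      if x ∈ (P' \ P).image f then (#(E \ P.image g) : ℝ) / #(P' \ P) else 0 := by
  have himage : x ∈ P'.image f ↔ x ∈ (P' \ P).image f := by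
    rw [← union_sdiff_of_subset hP, image_union, mem_union, image_eq_of_mem_extensions hf,
      or_iff_right hx, union_sdiff_of_subset hP]
  rw [hitWeight, image_eq_of_mem_extensions hf, if_neg hx]
  simp only [himage]

theorem hitWeight_le (hf : f ∈ injectiveSeqs ι E) (hP : P ⊂ P') :
    hitWeight E P P' x f ≤ #E / #(P' \ P) := by
  have hpos : (0 : ℝ) < #(P' \ P) := by
    exact_mod_cast card_pos.2 (sdiff_nonempty.2 hP.2)
  unfold hitWeight
  split_ifs
  · rw [one_le_div hpos]
    exact_mod_cast (card_le_univ _).trans (card_le_card_of_mem_injectiveSeqs hf)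
  · gcongr
    exact sdiff_subset
  · positivity

theorem expect_hitWeight (hP : P ⊂ P') (hg : (extensions E P g).Nonempty) (hx : x ∈ E) :
    𝔼 f ∈ extensions E P g, hitWeight E P P' x f = 1 := by
  by_cases hxg : x ∈ P.image g
  · rw [expect_congr rfl fun f hf ↦ hitWeight_eq_one hf hxg, expect_const hg]
  have hx' : x ∈ E \ P.image g := mem_sdiff.2 ⟨hx, hxg⟩
  have hcount : (#{f ∈ extensions E P g | x ∈ (P' \ P).image f} * #(E \ P.image g) : ℝ) =
      #(P' \ P) * #(extensions E P g) := by
    exact_mod_cast card_filter_mem_image_mul sdiff_disjoint hx'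
  have hext : (#(extensions E P g) : ℝ) ≠ 0 := by exact_mod_cast hg.card_pos.ne'
  have hblock : (#(P' \ P) : ℝ) ≠ 0 := by exact_mod_cast (card_pos.2 (sdiff_nonempty.2 hP.2)).ne'
  rw [expect_congr rfl fun f hf ↦ hitWeight_eq_ite hP.1 hf hxg, expect_eq_sum_div_card,
    ← sum_filter, sum_const, nsmul_eq_mul, ← mul_div_assoc, hcount]
  field_simp

theorem expect_hitWeight_mul_le (hP : P ⊂ P') (hg : (extensions E P g).Nonempty)
    (hx : x ∈ E) (hy : y ∈ E) (hxy : x ≠ y) :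
    𝔼 f ∈ extensions E P g, hitWeight E P P' x f * hitWeight E P P' y f ≤ 1 := by
  by_cases hxg : x ∈ P.image g
  · rw [expect_congr rfl fun f hf ↦ by rw [hitWeight_eq_one hf hxg, one_mul],
      expect_hitWeight hP hg hy]
  by_cases hyg : y ∈ P.image g
  · rw [expect_congr rfl fun f hf ↦ by rw [hitWeight_eq_one hf hyg, mul_one],
      expect_hitWeight hP hg hx]
  have hcount : (#{f ∈ extensions E P g | x ∈ (P' \ P).image f ∧ y ∈ (P' \ P).image f} *
      #(E \ P.image g) ^ 2 : ℝ) ≤ #(P' \ P) ^ 2 * #(extensions E P g) := by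
    exact_mod_cast card_filter_mem_image_and_mul_sq_le sdiff_disjoint
      (mem_sdiff.2 ⟨hx, hxg⟩) (mem_sdiff.2 ⟨hy, hyg⟩) hxy
  have _ : (0 : ℝ) < #(extensions E P g) := by exact_mod_cast hg.card_pos
  have hblock : (0 : ℝ) < #(P' \ P) := by exact_mod_cast card_pos.2 (sdiff_nonempty.2 hP.2)
  calc 𝔼 f ∈ extensions E P g, hitWeight E P P' x f * hitWeight E P P' y f
      = 𝔼 f ∈ extensions E P g, if x ∈ (P' \ P).image f ∧ y ∈ (P' \ P).image f then
          ((#(E \ P.image g) : ℝ) / #(P' \ P)) ^ 2 else 0 := expect_congr rfl fun f hf ↦ by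
        rw [hitWeight_eq_ite hP.1 hf hxg, hitWeight_eq_ite hP.1 hf hyg, ite_and, sq]
        split_ifs <;> simp only [mul_zero, zero_mul]
    _ = #{f ∈ extensions E P g | x ∈ (P' \ P).image f ∧ y ∈ (P' \ P).image f} *
          #(E \ P.image g) ^ 2 / (#(P' \ P) ^ 2 * #(extensions E P g)) := by
        rw [expect_eq_sum_div_card, ← sum_filter, sum_const, nsmul_eq_mul]
        field_simp
    _ ≤ 1 := div_le_one_of_le₀ hcount (by positivity)

theorem expect_hitWeight_mul_self_le (hP : P ⊂ P') (hg : (extensions E P g).Nonempty)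
    (hx : x ∈ E) :
    𝔼 f ∈ extensions E P g, hitWeight E P P' x f * hitWeight E P P' x f ≤ #E / #(P' \ P) := by
  calc 𝔼 f ∈ extensions E P g, hitWeight E P P' x f * hitWeight E P P' x f
      ≤ 𝔼 f ∈ extensions E P g, #E / #(P' \ P) * hitWeight E P P' x f := by
        refine expect_le_expect fun f hf ↦ ?_
        gcongr
        exacts [hitWeight_nonneg, hitWeight_le (mem_extensions.1 hf).1 hP]
    _ = #E / #(P' \ P) := by rw [← mul_expect, expect_hitWeight hP hg hx, mul_one]

theorem expect_hitWeight_mul_le_pow_ite {C : Prop} [Decidable C] (hP : P ⊂ P')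
    (hg : g ∈ injectiveSeqs ι E) (hx : x ∈ E) (hy : y ∈ E) (hC : x = y → C)
    {Q : ℝ} (hQ : #E / #(P' \ P) ≤ Q) (hQ_one : 1 ≤ Q) :
    𝔼 f ∈ extensions E P g, hitWeight E P P' x f * hitWeight E P P' y f ≤
      Q ^ if C then 1 else 0 := by
  have hne : (extensions E P g).Nonempty := ⟨g, self_mem_extensions hg⟩
  obtain rfl | hxy := eq_or_ne x y
  · rw [if_pos (hC rfl), pow_one]
    exact (expect_hitWeight_mul_self_le hP hne hx).trans hQ
  · exact (expect_hitWeight_mul_le hP hne hx hy hxy).trans (one_le_pow₀ hQ_one)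

end RandomInjections

section Coloring

variable {V : Type} {r N : ℕ} (π : PainterStrategy V r)

theorem runPainterAux_append (h : EdgeHistory V r) (l l' : List (Sym2 V)) :
    runPainterAux π h (l ++ l') = runPainterAux π (runPainterAux π h l) l' := by
  induction l generalizing h with
  | nil => rfl
  | cons _ _ ih => exact ih _

theorem subset_runPainterAux (h : EdgeHistory V r) (l : List (Sym2 V)) :
    h ⊆ runPainterAux π h l := by
  induction l generalizing h with
  | nil => exact List.Subset.refl h
  | cons _ _ ih => exact List.Subset.trans (List.subset_append_left h _) (ih _)

theorem map_fst_runPainterAux (h : EdgeHistory V r) (l : List (Sym2 V)) :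
    (runPainterAux π h l).map Prod.fst = h.map Prod.fst ++ l := by
  induction l generalizing h with
  | nil => exact (List.append_nil _).symm
  | cons _ _ ih => simp only [runPainterAux, ih, List.map_append, List.map_cons, List.map_nil,
      List.append_assoc, List.singleton_append]

theorem runPainter_take_subset (l : List (Sym2 V)) (k : ℕ) :
    runPainter π (l.take k) ⊆ runPainter π l := by
  conv_rhs => rw [← List.take_append_drop k l, runPainter, runPainterAux_append]
  exact subset_runPainterAux π _ _

/-- The first `k` of `N` rounds. -/
def firstRounds (N k : ℕ) : Finset (Fin N) := {i | i.val < k}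

theorem firstRounds_mono {k l : ℕ} (h : k ≤ l) : firstRounds N k ⊆ firstRounds N l :=
  Finset.monotone_filter_right _ fun _ _ hi ↦ lt_of_lt_of_le hi h

theorem firstRounds_zero : firstRounds N 0 = ∅ :=
  Finset.filter_false_of_mem fun _ _ ↦ Nat.not_lt_zero _

theorem card_firstRounds_sdiff {k m : ℕ} (h : k + m ≤ N) :
    (firstRounds N (k + m) \ firstRounds N k).card = m := by
  rw [Finset.card_sdiff_of_subset (firstRounds_mono (Nat.le_add_right k m)), firstRounds,
    firstRounds, Fin.card_filter_val_lt, Fin.card_filter_val_lt]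
  omega

theorem firstRounds_ssubset {k m : ℕ} (hm : 0 < m) (h : k + m ≤ N) :
    firstRounds N k ⊂ firstRounds N (k + m) := by
  refine (firstRounds_mono (Nat.le_add_right k m)).ssubset_of_ne fun heq ↦ hm.ne ?_
  rw [← card_firstRounds_sdiff h, heq, Finset.sdiff_self, Finset.card_empty]

/-- The color that the pair `x` has received in the first `k` rounds; a junk value if `x` has not
been drawn by then. -/
noncomputable def colorAfter (f : Fin N → Sym2 V) (k : ℕ) (x : Sym2 V) : Fin r :=
  if h : ∃ c, (x, c) ∈ runPainter π ((List.ofFn f).take k) then h.choose else π [] x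

theorem colorAfter_congr {f g : Fin N → Sym2 V} {k : ℕ} (h : ∀ i ∈ firstRounds N k, f i = g i) :
    colorAfter π f k = colorAfter π g k := by
  have htake : (List.ofFn f).take k = (List.ofFn g).take k :=
    List.ext_getElem (by simp only [List.length_take, List.length_ofFn]) fun i hf _ ↦ by
      simp only [List.length_take, List.length_ofFn, lt_inf_iff] at hf
      simpa using h ⟨i, hf.2⟩ (by simpa [firstRounds] using hf.1)
  unfold colorAfter
  rw [htake]

theorem mk_colorAfter_mem_runPainter [DecidableEq V] {f : Fin N → Sym2 V} {k : ℕ} {x : Sym2 V}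
    (hx : x ∈ (firstRounds N k).image f) :
    (x, colorAfter π f k x) ∈ runPainter π (List.ofFn f) := by
  obtain ⟨i, hi, rfl⟩ := Finset.mem_image.1 hx
  have hik : i.val < k := (Finset.mem_filter.1 hi).2
  have hdrawn : f i ∈ (runPainter π ((List.ofFn f).take k)).map Prod.fst := by
    rw [runPainter, map_fst_runPainterAux, List.map_nil, List.nil_append]
    exact List.mem_take_iff_getElem.2 ⟨i, by simpa using hik, by simp⟩
  have hcolor : ∃ c, (f i, c) ∈ runPainter π ((List.ofFn f).take k) := by
    simpa only [List.mem_map, Prod.exists, exists_eq_right, exists_and_right, exists_eq_right]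
      using hdrawn
  rw [colorAfter, dif_pos hcolor]
  exact runPainter_take_subset π _ k hcolor.choose_spec

end Coloring

section TreeStructure

variable {V : Type} {r : ℕ}

/-- The maximum, over the branches of a strategy tree, of the number of presented pairs that lie
in `C`. For `C = Set.univ` this is the depth of the tree. -/
noncomputable def BuilderTree.maxBranch (C : Set (Sym2 V)) : BuilderTree V r → ℕ
  | .leaf => 0
  | .node e child => (if e ∈ C then 1 else 0) + Finset.univ.sup fun c ↦ (child c).maxBranch C

theorem BuilderTree.add_mul_maxBranch_child_le {e : Sym2 V} {child : Fin r → BuilderTree V r}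
    {m s N : ℕ} (h : s + m * (BuilderTree.node e child).maxBranch Set.univ ≤ N) :
    s + m ≤ N ∧ ∀ c, s + m + m * (child c).maxBranch Set.univ ≤ N := by
  rw [maxBranch, if_pos (Set.mem_univ e), mul_add, mul_one, ← add_assoc] at h
  exact ⟨le_of_add_le_left h, fun c ↦ (Nat.add_le_add_left (Nat.mul_le_mul_left m
    (Finset.le_sup (f := fun c ↦ (child c).maxBranch Set.univ) (Finset.mem_univ c))) _).trans h⟩

theorem DensityLE.edgesWithin_le {G : SimpleGraph V} {d : ℝ} (hG : DensityLE G d) (S : Finset V) :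
    (edgesWithin G S : ℝ) ≤ d * S.card := by
  obtain rfl | hS := S.eq_empty_or_nonempty
  · have hempty : {e : Sym2 V | ∀ v ∈ e, v ∈ ((∅ : Finset V) : Set V)} = ∅ :=
      Set.eq_empty_of_forall_notMem fun e he ↦ by simpa using he _ e.out_fst_mem
    rw [edgesWithin, hempty, Set.inter_empty, Set.ncard_empty]
    simp
  · exact hG S hS

theorem mem_edgeSet_boardOf {e : Sym2 V} {l : List (Sym2 V)} :
    e ∈ (boardOf l).edgeSet ↔ e ∈ l ∧ ¬ e.IsDiag := by
  rw [boardOf, edgeSet_fromEdgeSet]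
  rfl

theorem edgesWithin_boardOf_cons {e : Sym2 V} {l : List (Sym2 V)} (he : ¬ e.IsDiag) (hel : e ∉ l)
    (S : Set V) :
    edgesWithin (boardOf (e :: l)) S =
      edgesWithin (boardOf l) S + if ∀ v ∈ e, v ∈ S then 1 else 0 := by
  have hinsert : (boardOf (e :: l)).edgeSet = insert e (boardOf l).edgeSet := by
    ext x
    simp only [mem_edgeSet_boardOf, List.mem_cons, Set.mem_insert_iff]
    exact ⟨fun h ↦ h.1.imp_right fun hx ↦ ⟨hx, h.2⟩, fun h ↦ h.elim
      (fun hx ↦ ⟨Or.inl hx, hx ▸ he⟩) fun hx ↦ ⟨Or.inr hx.1, hx.2⟩⟩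
  have hnot : e ∉ (boardOf l).edgeSet := fun h ↦ hel (mem_edgeSet_boardOf.1 h).1
  have hfin : (boardOf l).edgeSet.Finite :=
    l.finite_toSet.subset fun x hx ↦ (mem_edgeSet_boardOf.1 hx).1
  have hwithin : (∀ v ∈ e, v ∈ S) ↔ e ∈ {e : Sym2 V | ∀ v ∈ e, v ∈ S} := Iff.rfl
  rw [edgesWithin, edgesWithin, hinsert, hwithin]
  split_ifs with h
  · rw [Set.insert_inter_of_mem h, Set.ncard_insert_of_notMem (fun hmem ↦ hnot hmem.1)
      (hfin.inter_of_left _)]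
  · rw [Set.insert_inter_of_notMem h, add_zero]

theorem BuilderTree.LegalDensity.edgesWithin_add_maxBranch_le {d : ℝ} {T : BuilderTree V r}
    {used : List (Sym2 V)} (hproper : T.Proper used) (hlegal : T.LegalDensity d {e | e ∈ used})
    {S : Finset V} (hS : (edgesWithin (boardOf used) S : ℝ) ≤ d * S.card) :
    (edgesWithin (boardOf used) S + T.maxBranch {e | ∀ v ∈ e, v ∈ S} : ℝ) ≤ d * S.card := by
  induction T generalizing used with
  | leaf => simpa only [maxBranch, Nat.cast_zero, add_zero] using hS
  | node e child ih =>
    obtain ⟨hdiag, hunused, hproper⟩ := hproper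
    obtain ⟨hdensity, hlegal⟩ := hlegal
    have hcons : insert e {x | x ∈ used} = {x | x ∈ e :: used} := by
      ext x
      simp only [Set.mem_insert_iff, Set.mem_ofPred_eq, List.mem_cons]
    rw [hcons] at hdensity hlegal
    have hboard : (edgesWithin (boardOf (e :: used)) S : ℝ) ≤ d * S.card :=
      DensityLE.edgesWithin_le hdensity S
    have hsup : (Finset.univ.sup fun c ↦ (child c).maxBranch {e | ∀ v ∈ e, v ∈ S}) ≤
        ⌊d * S.card - edgesWithin (boardOf (e :: used)) S⌋₊ :=
      Finset.sup_le fun c _ ↦ Nat.le_floor (by linarith [ih c (hproper c) (hlegal c) hboard])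
    have hsup := (Nat.le_floor_iff (sub_nonneg.2 hboard)).1 hsup
    rw [edgesWithin_boardOf_cons hdiag hunused] at hsup
    simp only [maxBranch, Set.mem_ofPred_eq, Finset.mem_coe, Nat.cast_add] at hsup ⊢
    linarith

theorem BuilderTree.LegalDensity.maxBranch_le {d : ℝ} (hd : 0 ≤ d) {T : BuilderTree V r}
    (hproper : T.Proper []) (hlegal : T.LegalDensity d ∅) (S : Finset V) :
    (T.maxBranch {e | ∀ v ∈ e, v ∈ S} : ℝ) ≤ d * S.card := by
  have hempty : edgesWithin (boardOf []) (S : Set V) = 0 := by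
    simp [edgesWithin, boardOf]
  have h := edgesWithin_add_maxBranch_le (used := []) hproper (by simpa using hlegal) (S := S)
    (by rw [hempty, Nat.cast_zero]; positivity)
  simpa only [hempty, Nat.cast_zero, zero_add] using h

theorem BuilderTree.LegalDensity.half_le {d : ℝ} {e : Sym2 V} {child : Fin r → BuilderTree V r}
    (hproper : (BuilderTree.node e child).Proper [])
    (hlegal : (BuilderTree.node e child).LegalDensity d ∅) : 1 / 2 ≤ d := by
  have hdensity : DensityLE (boardOf [e]) d := by
    have h := hlegal.1
    rwa [show insert e ∅ = {x | x ∈ [e]} by simp] at h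
  have hle := hdensity.edgesWithin_le e.toFinset
  rw [edgesWithin_boardOf_cons hproper.1 List.not_mem_nil, if_pos fun v hv ↦ by simpa using hv,
    Sym2.card_toFinset_of_not_isDiag e hproper.1] at hle
  push_cast at hle
  linarith [(edgesWithin (boardOf []) (e.toFinset : Set V)).cast_nonneg (α := ℝ)]

end TreeStructure

section TreeWeight

open Finset
open scoped BigOperators

theorem forall_mem_range_of_map_eq_map {α β γ : Type*} {f : α → γ} {g : β → γ} {e : Sym2 α}
    {e' : Sym2 β} (h : e.map f = e'.map g) :
    ∀ v ∈ e, f v ∈ Set.range g := by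
  intro v hv
  obtain ⟨w, -, hw⟩ := Sym2.mem_map.1 (h ▸ Sym2.mem_map.2 ⟨v, hv, rfl⟩)
  exact ⟨w, hw⟩

/-- The pairs of distinct vertices of the host board. -/
def allPairs (W : Type) [Fintype W] [DecidableEq W] : Finset (Sym2 W) := {e | ¬ e.IsDiag}

theorem card_allPairs (W : Type) [Fintype W] [DecidableEq W] :
    #(allPairs W) = (Fintype.card W).choose 2 := by
  rw [← Sym2.card_subtype_not_diag, Fintype.card_subtype, allPairs]

variable {V W : Type} [Fintype W] [DecidableEq W] {r N m : ℕ} {π : PainterStrategy W r}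

theorem map_mem_allPairs {e : Sym2 V} (he : ¬ e.IsDiag) (φ : V ↪ W) : e.map φ ∈ allPairs W := by
  rw [allPairs, mem_filter, Sym2.isDiag_map φ.injective]
  exact ⟨mem_univ _, he⟩

/-- The weight with which the random edge sequence `f` realizes, on the vertices `φ`, a branch of
the strategy tree. The pair `φ e` presented at a node is looked for in the block of `m` rounds
following round `s`, and the weight is carried on along the child given by its color. -/
noncomputable def treeWeight (π : PainterStrategy W r) (m : ℕ) (φ : V ↪ W) :
    BuilderTree V r → ℕ → (Fin N → Sym2 W) → ℝ
  | .leaf, _, _ => 1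
  | .node e child, s, f =>
    hitWeight (allPairs W) (firstRounds N s) (firstRounds N (s + m)) (e.map φ) f *
      treeWeight π m φ (child (colorAfter π f (s + m) (e.map φ))) (s + m) f

theorem exists_leafHist_of_treeWeight_ne_zero {φ : V ↪ W} {T : BuilderTree V r} {s : ℕ}
    {f : Fin N → Sym2 W} (h : treeWeight π m φ T s f ≠ 0) :
    ∃ B ∈ T.leafHists, ∀ e c, (e, c) ∈ B → (e.map φ, c) ∈ runPainter π (List.ofFn f) := by
  induction T generalizing s with
  | leaf => exact ⟨[], Set.mem_singleton _, fun _ _ hmem ↦ absurd hmem List.not_mem_nil⟩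
  | node e child ih =>
    obtain ⟨hhit, hchild⟩ := mul_ne_zero_iff.1 h
    obtain ⟨B, hB, hcopy⟩ := ih _ hchild
    refine ⟨(e, _) :: B, Set.mem_iUnion.2 ⟨_, B, hB, rfl⟩, fun e' c hmem ↦ ?_⟩
    obtain heq | hmem := List.mem_cons.1 hmem
    · obtain ⟨rfl, rfl⟩ := Prod.mk.inj heq
      exact mk_colorAfter_mem_runPainter π (mem_image_of_hitWeight_ne_zero
        (firstRounds_mono (Nat.le_add_right s m)) hhit)
    · exact hcopy e' c hmem

theorem hasLeafCopy_of_treeWeight_ne_zero {a n : ℕ} {π : PainterStrategy (Fin n) r}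
    {φ : Fin a ↪ Fin n} {T : BuilderTree (Fin a) r} {s : ℕ} {f : Fin N → Sym2 (Fin n)}
    (h : treeWeight π m φ T s f ≠ 0) : HasLeafCopy T (runPainter π (List.ofFn f)) := by
  obtain ⟨B, hB, hcopy⟩ := exists_leafHist_of_treeWeight_ne_zero h
  refine ⟨B, hB, φ, fun c u v huv ↦ ?_⟩
  rw [colorGraph, fromEdgeSet_adj] at huv ⊢
  exact ⟨hcopy s(u, v) c huv.1, φ.injective.ne huv.2⟩

theorem treeWeight_node_eq {φ : V ↪ W} {e : Sym2 V} {child : Fin r → BuilderTree V r} {s : ℕ}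
    {f f₁ : Fin N → Sym2 W} (hf : f ∈ extensions (allPairs W) (firstRounds N (s + m)) f₁) :
    treeWeight π m φ (.node e child) s f =
      hitWeight (allPairs W) (firstRounds N s) (firstRounds N (s + m)) (e.map φ) f₁ *
        treeWeight π m φ (child (colorAfter π f₁ (s + m) (e.map φ))) (s + m) f := by
  have hagree := (mem_extensions.1 hf).2
  rw [treeWeight, hitWeight_congr (firstRounds_mono (Nat.le_add_right s m)) hagree,
    colorAfter_congr π hagree]

theorem expect_treeWeight (hm : 0 < m) (φ : V ↪ W) {T : BuilderTree V r} {used : List (Sym2 V)}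
    (hT : T.Proper used) {s : ℕ} (hs : s + m * T.maxBranch Set.univ ≤ N) {g : Fin N → Sym2 W}
    (hg : g ∈ injectiveSeqs (Fin N) (allPairs W)) :
    𝔼 f ∈ extensions (allPairs W) (firstRounds N s) g, treeWeight π m φ T s f = 1 := by
  induction T generalizing used s g with
  | leaf => exact expect_const ⟨g, self_mem_extensions hg⟩ 1
  | node e child ih =>
    obtain ⟨hblock, hbound⟩ := BuilderTree.add_mul_maxBranch_child_le hs
    set x := e.map φ
    rw [← expect_expect_extensions (firstRounds_mono (Nat.le_add_right s m))]
    have inner_eq : ∀ f₁ ∈ extensions (allPairs W) (firstRounds N s) g,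
        𝔼 f ∈ extensions (allPairs W) (firstRounds N (s + m)) f₁,
          treeWeight π m φ (.node e child) s f =
        hitWeight (allPairs W) (firstRounds N s) (firstRounds N (s + m)) x f₁ := fun f₁ hf₁ ↦ by
      rw [expect_congr rfl fun f hf ↦ treeWeight_node_eq hf, ← mul_expect,
        ih _ (hT.2.2 _) (hbound _) (mem_extensions.1 hf₁).1, mul_one]
    rw [expect_congr rfl inner_eq]
    exact expect_hitWeight (firstRounds_ssubset hm hblock) ⟨g, self_mem_extensions hg⟩
      (map_mem_allPairs hT.1 φ)

theorem expect_treeWeight_node_mul {φ ψ : V ↪ W} {e e' : Sym2 V}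
    {child child' : Fin r → BuilderTree V r} {s : ℕ} (f₁ : Fin N → Sym2 W) :
    𝔼 f ∈ extensions (allPairs W) (firstRounds N (s + m)) f₁,
      treeWeight π m φ (.node e child) s f * treeWeight π m ψ (.node e' child') s f =
    hitWeight (allPairs W) (firstRounds N s) (firstRounds N (s + m)) (e.map φ) f₁ *
      hitWeight (allPairs W) (firstRounds N s) (firstRounds N (s + m)) (e'.map ψ) f₁ *
      𝔼 f ∈ extensions (allPairs W) (firstRounds N (s + m)) f₁,
        treeWeight π m φ (child (colorAfter π f₁ (s + m) (e.map φ))) (s + m) f *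
          treeWeight π m ψ (child' (colorAfter π f₁ (s + m) (e'.map ψ))) (s + m) f := by
  rw [mul_expect]
  exact expect_congr rfl fun f hf ↦ by
    rw [treeWeight_node_eq hf, treeWeight_node_eq hf, mul_mul_mul_comm]

/-- Two embedded branches interact only through pairs presented at the same place of the host
board, and such a pair has both its ends in the common part of the two embeddings. -/
theorem expect_treeWeight_mul_le (hm : 0 < m) {φ ψ : V ↪ W} {T T' : BuilderTree V r}
    {used used' : List (Sym2 V)} (hT : T.Proper used) (hT' : T'.Proper used') {s : ℕ}
    (hs : s + m * T.maxBranch Set.univ ≤ N) (hs' : s + m * T'.maxBranch Set.univ ≤ N)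
    {Q : ℝ} (hQ : #(allPairs W) / m ≤ Q) (hQ_one : 1 ≤ Q) {g : Fin N → Sym2 W}
    (hg : g ∈ injectiveSeqs (Fin N) (allPairs W)) :
    𝔼 f ∈ extensions (allPairs W) (firstRounds N s) g,
      treeWeight π m φ T s f * treeWeight π m ψ T' s f ≤
    Q ^ T.maxBranch {e | ∀ v ∈ e, φ v ∈ Set.range ψ} := by
  induction T generalizing used used' T' s g with
  | leaf =>
    simp only [treeWeight, one_mul, expect_treeWeight hm ψ hT' hs' hg]
    exact one_le_pow₀ hQ_one
  | node e child ih =>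
    cases T' with
    | leaf =>
      simp only [treeWeight.eq_1, mul_one, expect_treeWeight hm φ hT hs hg]
      exact one_le_pow₀ hQ_one
    | node e' child' =>
      obtain ⟨hblock, hbound⟩ := BuilderTree.add_mul_maxBranch_child_le hs
      obtain ⟨-, hbound'⟩ := BuilderTree.add_mul_maxBranch_child_le hs'
      have hP := firstRounds_ssubset hm hblock
      set x := e.map φ
      set y := e'.map ψ
      set rest := univ.sup fun c ↦ (child c).maxBranch {e | ∀ v ∈ e, φ v ∈ Set.range ψ}
      set hit := hitWeight (allPairs W) (firstRounds N s) (firstRounds N (s + m))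
      have conditional_le : ∀ f₁ ∈ extensions (allPairs W) (firstRounds N s) g,
          𝔼 f ∈ extensions (allPairs W) (firstRounds N (s + m)) f₁,
            treeWeight π m φ (.node e child) s f * treeWeight π m ψ (.node e' child') s f ≤
          hit x f₁ * hit y f₁ * Q ^ rest := fun f₁ hf₁ ↦ by
        rw [expect_treeWeight_node_mul]
        refine mul_le_mul_of_nonneg_left ?_ (mul_nonneg hitWeight_nonneg hitWeight_nonneg)
        exact (ih _ (hT.2.2 _) (hT'.2.2 _) (hbound _) (hbound' _) (mem_extensions.1 hf₁).1).trans
          (pow_le_pow_right₀ hQ_one (le_sup (f := fun c ↦ (child c).maxBranch _) (mem_univ _)))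
      rw [← expect_expect_extensions hP.1]
      calc _
          ≤ 𝔼 f₁ ∈ extensions (allPairs W) (firstRounds N s) g,
              hit x f₁ * hit y f₁ * Q ^ rest := expect_le_expect conditional_le
        _ = (𝔼 f₁ ∈ extensions (allPairs W) (firstRounds N s) g, hit x f₁ * hit y f₁) * Q ^ rest :=
            (expect_mul ..).symm
        _ ≤ (Q ^ if ∀ v ∈ e, φ v ∈ Set.range ψ then 1 else 0) * Q ^ rest := by
            refine mul_le_mul_of_nonneg_right ?_ (by positivity)
            exact expect_hitWeight_mul_le_pow_ite hP hg (map_mem_allPairs hT.1 φ)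
              (map_mem_allPairs hT'.1 ψ) forall_mem_range_of_map_eq_map
              (by rwa [card_firstRounds_sdiff hblock]) hQ_one
        _ = Q ^ (BuilderTree.node e child).maxBranch {e | ∀ v ∈ e, φ v ∈ Set.range ψ} :=
            (pow_add ..).symm

end TreeWeight

section Probability

open Finset
open scoped BigOperators

theorem onlineProb_eq_expect (n N : ℕ) (A : (Fin N → Sym2 (Fin n)) → Prop) :
    onlineProb n N A =
      𝔼 f ∈ injectiveSeqs (Fin N) (allPairs (Fin n)), if A f then (1 : ℝ) else 0 := by
  have mem_iff : ∀ f : Fin N → Sym2 (Fin n),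
      f ∈ injectiveSeqs (Fin N) (allPairs (Fin n)) ↔ ValidSeqFun f := fun f ↦ by
    simp only [mem_injectiveSeqs, allPairs, mem_filter, Finset.mem_univ, true_and, ValidSeqFun,
      and_comm]
  have ncard_eq : ∀ S : Finset (Fin N → Sym2 (Fin n)), ∀ B : (Fin N → Sym2 (Fin n)) → Prop,
      (∀ f, f ∈ S ↔ B f) → {f | B f}.ncard = #S := fun S B h ↦ by
    rw [← Set.ncard_coe_finset]
    congr 1
    ext f
    exact (h f).symm
  rw [onlineProb, ncard_eq _ _ mem_iff, ncard_eq {f ∈ injectiveSeqs _ _ | A f} _ fun f ↦ by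
    rw [mem_filter, mem_iff], expect_eq_sum_div_card, sum_boole]

theorem onlineProb_le_one (n N : ℕ) (A : (Fin N → Sym2 (Fin n)) → Prop) :
    onlineProb n N A ≤ 1 :=
  div_le_one_of_le₀ (Nat.cast_le.2 (Set.ncard_le_ncard fun _ hf ↦ hf.1)) (Nat.cast_nonneg _)

theorem onlineProb_eq_one {n N : ℕ} (hN : N ≤ n.choose 2) {A : (Fin N → Sym2 (Fin n)) → Prop}
    (hA : ∀ f, A f) : onlineProb n N A = 1 := by
  simp only [onlineProb_eq_expect, hA, if_true]
  exact expect_const (injectiveSeqs_nonempty (by simpa [card_allPairs] using hN)) 1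

variable {V W : Type} [Fintype V] [Fintype W] [DecidableEq W] {r N m : ℕ}
  {π : PainterStrategy W r}

theorem expect_expect_treeWeight (hm : 0 < m) (hV : Fintype.card V ≤ Fintype.card W)
    (hN : N ≤ (Fintype.card W).choose 2) {T : BuilderTree V r} (hT : T.Proper [])
    (hdepth : m * T.maxBranch Set.univ ≤ N) :
    𝔼 f ∈ injectiveSeqs (Fin N) (allPairs W), 𝔼 φ : V ↪ W, treeWeight π m φ T 0 f = 1 := by
  obtain ⟨g, hg⟩ : (injectiveSeqs (Fin N) (allPairs W)).Nonempty :=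
    injectiveSeqs_nonempty (by rwa [Fintype.card_fin, card_allPairs])
  have : Nonempty (V ↪ W) := Function.Embedding.nonempty_of_card_le hV
  rw [expect_comm, ← extensions_empty (g := g), ← firstRounds_zero]
  simp only [expect_treeWeight hm _ hT (by rwa [zero_add]) hg]
  exact expect_const univ_nonempty 1

theorem expect_sq_expect_treeWeight_le {d : ℝ} (hd : 0 ≤ d) (hm : 0 < m) (hmN : m ≤ N)
    (hN : N ≤ (Fintype.card W).choose 2) (hV : Fintype.card V ≤ Fintype.card W)
    {T : BuilderTree V r} (hT : T.Proper []) (hTd : T.LegalDensity d ∅)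
    (hdepth : m * T.maxBranch Set.univ ≤ N) :
    𝔼 f ∈ injectiveSeqs (Fin N) (allPairs W), (𝔼 φ : V ↪ W, treeWeight π m φ T 0 f) ^ 2 ≤
      (Fintype.card W +
          Fintype.card V * ((Fintype.card W).choose 2 / m : ℝ) ^ d) ^ Fintype.card V /
        (Fintype.card W).descFactorial (Fintype.card V) := by
  obtain ⟨g, hg⟩ : (injectiveSeqs (Fin N) (allPairs W)).Nonempty :=
    injectiveSeqs_nonempty (by rwa [Fintype.card_fin, card_allPairs])
  have : Nonempty (V ↪ W) := Function.Embedding.nonempty_of_card_le hV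
  set Q : ℝ := (Fintype.card W).choose 2 / m
  have hQ_one : 1 ≤ Q := (one_le_div (by exact_mod_cast hm)).2 (by exact_mod_cast hmN.trans hN)
  have hs : 0 + m * T.maxBranch Set.univ ≤ N := by rwa [zero_add]
  have pair_le : ∀ φ ψ : V ↪ W,
      𝔼 f ∈ injectiveSeqs (Fin N) (allPairs W), treeWeight π m φ T 0 f * treeWeight π m ψ T 0 f ≤
      (Q ^ d) ^ #{v | φ v ∈ univ.map ψ} := fun φ ψ ↦ by
    have hdensity := BuilderTree.LegalDensity.maxBranch_le hd hT hTd {v | φ v ∈ univ.map ψ}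
    calc _
        ≤ Q ^ T.maxBranch {e | ∀ v ∈ e, φ v ∈ Set.range ψ} := by
          rw [← extensions_empty (g := g), ← firstRounds_zero]
          exact expect_treeWeight_mul_le hm hT hT hs hs (by rw [card_allPairs]) hQ_one hg
      _ ≤ Q ^ (d * #{v | φ v ∈ univ.map ψ}) := by
          rw [← Real.rpow_natCast]
          refine Real.rpow_le_rpow_of_exponent_le hQ_one ?_
          simpa using hdensity
      _ = (Q ^ d) ^ #{v | φ v ∈ univ.map ψ} := by
          rw [Real.rpow_mul (by positivity), Real.rpow_natCast]
  calc 𝔼 f ∈ injectiveSeqs (Fin N) (allPairs W), (𝔼 φ : V ↪ W, treeWeight π m φ T 0 f) ^ 2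
      = 𝔼 ψ : V ↪ W, 𝔼 φ : V ↪ W, 𝔼 f ∈ injectiveSeqs (Fin N) (allPairs W),
          treeWeight π m φ T 0 f * treeWeight π m ψ T 0 f := expect_sq_expect ..
    _ ≤ 𝔼 ψ : V ↪ W, 𝔼 φ : V ↪ W, (Q ^ d) ^ #{v | φ v ∈ univ.map ψ} :=
        expect_le_expect fun ψ _ ↦ expect_le_expect fun φ _ ↦ pair_le φ ψ
    _ ≤ 𝔼 _ψ : V ↪ W, (Fintype.card W + Fintype.card V * Q ^ d) ^ Fintype.card V /
          (Fintype.card W).descFactorial (Fintype.card V) :=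
        expect_le_expect fun ψ _ ↦ by
          have h := expect_pow_card_filter_mem_le (V := V) (univ.map ψ) (c := Q ^ d) (by positivity)
          rwa [card_map, card_univ] at h
    _ = _ := expect_const univ_nonempty _

theorem descFactorial_div_le_onlineProb {a n : ℕ} {π : PainterStrategy (Fin n) r} {d : ℝ}
    (hd : 0 ≤ d) (hm : 0 < m) (hmN : m ≤ N) (hN : N ≤ n.choose 2) (ha : a ≤ n)
    {T : BuilderTree (Fin a) r} (hT : T.Proper []) (hTd : T.LegalDensity d ∅)
    (hdepth : m * T.maxBranch Set.univ ≤ N) :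
    n.descFactorial a / (n + a * (n.choose 2 / m : ℝ) ^ d) ^ a ≤
      onlineProb n N fun f ↦ HasLeafCopy T (runPainter π (List.ofFn f)) := by
  have hsupport : ∀ f : Fin N → Sym2 (Fin n), 𝔼 φ : Fin a ↪ Fin n, treeWeight π m φ T 0 f ≠ 0 →
      HasLeafCopy T (runPainter π (List.ofFn f)) := fun f hf ↦ by
    obtain ⟨φ, -, hφ⟩ := exists_ne_zero_of_expect_ne_zero hf
    exact hasLeafCopy_of_treeWeight_ne_zero hφ
  have hsecond := sq_expect_le_expect_sq_mul_expect_ite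
    (injectiveSeqs (Fin N) (allPairs (Fin n))) _ _ fun f _ ↦ hsupport f
  rw [expect_expect_treeWeight hm (by simpa using ha) (by simpa using hN) hT hdepth, one_pow,
    ← onlineProb_eq_expect] at hsecond
  have hmoment := expect_sq_expect_treeWeight_le (π := π) hd hm hmN (by simpa using hN)
    (by simpa using ha) hT hTd hdepth
  simp only [Fintype.card_fin] at hmoment
  have hnonneg : 0 ≤ onlineProb n N fun f ↦ HasLeafCopy T (runPainter π (List.ofFn f)) :=
    div_nonneg (Nat.cast_nonneg _) (Nat.cast_nonneg _)
  have hprob := hsecond.trans (mul_le_mul_of_nonneg_right hmoment hnonneg)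
  have hdesc : (0 : ℝ) < n.descFactorial a := by exact_mod_cast Nat.descFactorial_pos.2 ha
  rw [div_mul_eq_mul_div, one_le_div hdesc] at hprob
  exact div_le_of_le_mul₀ (by positivity) hnonneg (by linarith)

end Probability

section Asymptotics

theorem tendsto_descFactorial_div_add_pow (a : ℕ) {u : ℕ → ℝ}
    (hu : u =o[atTop] fun n : ℕ ↦ (n : ℝ)) :
    Tendsto (fun n : ℕ ↦ (n.descFactorial a : ℝ) / (n + u n) ^ a) atTop (nhds 1) := by
  have hbase : (fun n : ℕ ↦ (n : ℝ) + u n) ~[atTop] fun n : ℕ ↦ (n : ℝ) :=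
    IsEquivalent.refl.add_isLittleO hu
  have hne : ∀ᶠ n : ℕ in atTop, ((n : ℝ) + u n) ^ a ≠ 0 :=
    ((hbase.symm.tendsto_atTop tendsto_natCast_atTop_atTop).eventually_ne_atTop 0).mono
      fun n hn ↦ pow_ne_zero a hn
  exact (isEquivalent_iff_tendsto_one hne).1
    ((isEquivalent_descFactorial a).trans (hbase.pow a).symm)

theorem isLittleO_rpow_choose_two_div {d : ℝ} (hd : 0 < d) {m : ℕ → ℝ}
    (hm : (fun n : ℕ ↦ (n : ℝ) ^ (2 - 1 / d)) =o[atTop] m) :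
    (fun n : ℕ ↦ (n.choose 2 / m n) ^ d) =o[atTop] fun n : ℕ ↦ (n : ℝ) := by
  have hchoose : (fun n : ℕ ↦ (n.choose 2 : ℝ)) =O[atTop]
      fun n : ℕ ↦ (n : ℝ) ^ (1 / d) * (n : ℝ) ^ (2 - 1 / d) :=
    .of_bound' <| (eventually_gt_atTop 0).mono fun n hn ↦ by
      rw [← Real.rpow_add (by exact_mod_cast hn), add_sub_cancel, Real.rpow_two]
      simpa using (mod_cast Nat.choose_le_pow n 2 : (n.choose 2 : ℝ) ≤ n ^ 2)
  have hratio : (fun n : ℕ ↦ (n : ℝ) ^ (2 - 1 / d) * (m n)⁻¹) =o[atTop] fun _ ↦ (1 : ℝ) :=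
    (isLittleO_one_iff ℝ).2 hm.tendsto_div_nhds_zero
  have hquot : (fun n : ℕ ↦ n.choose 2 / m n) =o[atTop] fun n : ℕ ↦ (n : ℝ) ^ (1 / d) := by
    refine (hchoose.mul (isBigO_refl (fun n ↦ (m n)⁻¹) _)).trans_isLittleO ?_
    simpa only [mul_assoc, mul_one] using
      (isBigO_refl (fun n : ℕ ↦ (n : ℝ) ^ (1 / d)) _).mul_isLittleO hratio
  have hpow := hquot.rpow hd (Eventually.of_forall fun n ↦ by positivity)
  refine hpow.congr_right fun n ↦ ?_
  rw [← Real.rpow_mul n.cast_nonneg, one_div_mul_cancel hd.ne', Real.rpow_one]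

theorem isBigO_natCast_div {α : Type*} {l : Filter α} {N : α → ℕ} (hN : Tendsto N l atTop) {K : ℕ}
    (hK : 0 < K) : (fun x ↦ (N x : ℝ)) =O[l] fun x ↦ ((N x / K : ℕ) : ℝ) := by
  refine .of_bound (2 * K) ((hN.eventually_ge_atTop K).mono fun x hx ↦ ?_)
  have hquot : 1 ≤ N x / K := (Nat.one_le_div_iff hK).2 hx
  have hle : N x ≤ 2 * K * (N x / K) := by
    nlinarith [Nat.div_add_mod (N x) K, Nat.mod_lt (N x) hK]
  simpa using (mod_cast hle : (N x : ℝ) ≤ 2 * K * (N x / K : ℕ))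

theorem tendsto_atTop_of_rpow_isLittleO {p : ℝ} (hp : 0 ≤ p) {N : ℕ → ℕ}
    (hN : (fun n : ℕ ↦ (n : ℝ) ^ p) =o[atTop] fun n ↦ (N n : ℝ)) : Tendsto N atTop atTop := by
  have hone : (fun _ : ℕ ↦ (1 : ℝ)) =O[atTop] fun n : ℕ ↦ (n : ℝ) ^ p :=
    .of_bound' <| (eventually_ge_atTop 1).mono fun n hn ↦ by
      rw [norm_one]
      exact (Real.one_le_rpow (by exact_mod_cast hn) hp).trans (le_abs_self _)
  have h := (isLittleO_one_left_iff ℝ).1 (hone.trans_isLittleO hN)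
  simpa only [Real.norm_natCast, tendsto_natCast_atTop_iff] using h

theorem tendsto_onlineProb_hasLeafCopy_leaf (a : ℕ) {r : ℕ} {N : ℕ → ℕ}
    (hN : ∀ n, N n ≤ n.choose 2) (π : (n : ℕ) → PainterStrategy (Fin n) r) :
    Tendsto (fun n ↦ onlineProb n (N n) fun f ↦
      HasLeafCopy (.leaf : BuilderTree (Fin a) r) (runPainter (π n) (List.ofFn f)))
      atTop (nhds 1) := by
  refine tendsto_const_nhds.congr' ((eventually_ge_atTop a).mono fun n ha ↦ ?_)
  refine (onlineProb_eq_one (hN n) fun f ↦ ?_).symm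
  refine ⟨[], Set.mem_singleton _, Fin.castLEEmb ha, fun c u v huv ↦ ?_⟩
  exact absurd ((fromEdgeSet_adj _).1 huv).1 List.not_mem_nil

theorem tendsto_onlineProb_hasLeafCopy {a r : ℕ} {d : ℝ} (hd : 1 / 2 ≤ d)
    {T : BuilderTree (Fin a) r} (hT : T.Proper []) (hTd : T.LegalDensity d ∅) {N : ℕ → ℕ}
    (hN : (fun n : ℕ ↦ (n : ℝ) ^ (2 - 1 / d)) =o[atTop] fun n ↦ (N n : ℝ))
    (hNle : ∀ n, N n ≤ n.choose 2) (π : (n : ℕ) → PainterStrategy (Fin n) r) :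
    Tendsto (fun n ↦ onlineProb n (N n) fun f ↦
      HasLeafCopy T (runPainter (π n) (List.ofFn f))) atTop (nhds 1) := by
  have hd_pos : 0 < d := one_half_pos.trans_le hd
  have hexp : 0 ≤ 2 - 1 / d := by
    have := one_div_le_one_div_of_le one_half_pos hd
    norm_num at this ⊢
    exact this
  set K := T.maxBranch Set.univ + 1
  have hK : 0 < K := Nat.succ_pos _
  have hN_top := tendsto_atTop_of_rpow_isLittleO hexp hN
  have hlam : (fun n : ℕ ↦ a * (n.choose 2 / (N n / K : ℕ) : ℝ) ^ d) =o[atTop]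
      fun n : ℕ ↦ (n : ℝ) :=
    (isLittleO_rpow_choose_two_div hd_pos
      (hN.trans_isBigO (isBigO_natCast_div hN_top hK))).const_mul_left a
  refine tendsto_of_tendsto_of_tendsto_of_le_of_le' (tendsto_descFactorial_div_add_pow a hlam)
    tendsto_const_nhds ?_ (.of_forall fun n ↦ onlineProb_le_one _ _ _)
  filter_upwards [hN_top.eventually_ge_atTop K, eventually_ge_atTop a] with n hKN ha
  refine descFactorial_div_le_onlineProb hd_pos.le (Nat.div_pos hKN hK) (Nat.div_le_self _ _)
    (hNle n) ha hT hTd ?_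
  exact (Nat.mul_le_mul_left _ (Nat.le_succ _)).trans (Nat.div_mul_le_self _ _)

end Asymptotics

/-- Lemma 7 of the paper. Let `𝒯` be a Builder strategy tree with `r ≥ 2`
colors on a board with `a ≥ 1` vertices that is legal for density restriction `d > 0`. If
`n^(2-1/d) = o(N(n))` and `N(n) ≤ n(n-1)/2`, then for any sequence of online Painter
strategies, a.a.s. the colored board after `N(n)` steps contains a copy of a leaf of `𝒯`. -/
theorem statement3 (r a : ℕ) (hr : 2 ≤ r) (ha : 1 ≤ a) (d : ℝ) (hd : 0 < d)
    (T : BuilderTree (Fin a) r) (hTp : T.Proper []) (hTd : T.LegalDensity d ∅)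
    (N : ℕ → ℕ)
    (hN : (fun n : ℕ => (n : ℝ) ^ ((2 : ℝ) - 1 / d)) =o[atTop] (fun n : ℕ => (N n : ℝ)))
    (hNle : ∀ n : ℕ, N n ≤ n * (n - 1) / 2)
    (π : (n : ℕ) → PainterStrategy (Fin n) r) :
    Tendsto (fun n : ℕ => onlineProb n (N n)
        (fun f => HasLeafCopy T (runPainter (π n) (List.ofFn f))))
      atTop (nhds 1) := by
  have hNchoose (n : ℕ) : N n ≤ n.choose 2 := (hNle n).trans_eq n.choose_two_right.symm
  cases T with
  | leaf => exact tendsto_onlineProb_hasLeafCopy_leaf a hNchoose π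
  | node e child =>
    have hd_half := BuilderTree.LegalDensity.half_le hTp hTd
    exact tendsto_onlineProb_hasLeafCopy hd_half hTp hTd hN hNchoose π
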